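/- Lemma (L² mean value inequality): Let (Γ, π, μ) be a weighted graph with controlled and uniformly lazy weights admitting a relative Faber-Krahn function of the form Λ(B(z,r), ν) = (a/r²)(F(z,r)/ν)^α for some positive function F and constants a, α > 0. Then there is a constant C such that for every z ∈ Γ, every R ≥ 1, every integer T ≥ 1, and every non-negative subsolution u of the discrete heat equation on {0, 1, …, 2T} × B(z,R): u(T,z)² ≤ C (F(z,R) · min{T^{1+1/α} R^{−2/α}, R²})^{−1} ∑_{k=0}^{2T} ∑_{x ∈ B(z,R)} u(k,x)² π(x). -/

import Mathlib

open scoped BigOperators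

/-- Sum of a real-valued function over a set of vertices. -/
noncomputable def setSum {V : Type*} (A : Set V) (f : V → ℝ) : ℝ := ∑' y : A, f (y : V)

open Classical in
/-- The Markov kernel attached to vertex weights `pw` and edge weights `ew`. -/
noncomputable def mkernel {V : Type*} (pw : V → ℝ) (ew : V → V → ℝ) (x y : V) : ℝ :=
  if x = y then 1 - (∑' z, ew x z) / pw x else ew x y / pw x

open Classical in
/-- Iterates (convolution powers) of the Markov kernel. -/
noncomputable def mkernelPow {V : Type*} (pw : V → ℝ) (ew : V → V → ℝ) : ℕ → V → V → ℝ
  | 0 => fun x y => if x = y then 1 else 0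
  | n + 1 => fun x y => ∑' z, mkernel pw ew x z * mkernelPow pw ew n z y

/-- The heat kernel (transition density) of the random walk. -/
noncomputable def mheat {V : Type*} (pw : V → ℝ) (ew : V → V → ℝ) (n : ℕ) (x y : V) : ℝ :=
  mkernelPow pw ew n x y / pw y

/-- A weighted graph: a simple connected graph with symmetric, adapted edge weights
subordinate to positive vertex weights. -/
structure WeightedGraph (V : Type*) where
  G : SimpleGraph V
  wV : V → ℝ
  wE : V → V → ℝ
  wV_pos : ∀ x, 0 < wV x
  wE_nonneg : ∀ x y, 0 ≤ wE x y
  wE_symm : ∀ x y, wE x y = wE y x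
  adapted : ∀ x y, 0 < wE x y ↔ G.Adj x y
  connected : G.Connected
  wE_summable : ∀ x, Summable fun y => wE x y
  subordinate : ∀ x, (∑' y, wE x y) ≤ wV x

namespace WeightedGraph

variable {V : Type*}

/-- Controlled weights with constant `Cc`. -/
def Controlled (Γ : WeightedGraph V) (Cc : ℝ) : Prop :=
  1 < Cc ∧ ∀ x y, Γ.G.Adj x y → Γ.wV x ≤ Cc * Γ.wE x y

/-- Uniformly lazy weights with constant `Ce`. -/
def UniformlyLazy (Γ : WeightedGraph V) (Ce : ℝ) : Prop :=
  Ce ∈ Set.Ioo (0 : ℝ) 1 ∧ ∀ x, (∑' y, Γ.wE x y) ≤ (1 - Ce) * Γ.wV x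

/-- Closed ball for the graph distance. -/
noncomputable def ball (Γ : WeightedGraph V) (x : V) (r : ℝ) : Set V :=
  {y | (Γ.G.dist x y : ℝ) ≤ r}

/-- Volume of a ball. -/
noncomputable def vol (Γ : WeightedGraph V) (x : V) (r : ℝ) : ℝ :=
  setSum (Γ.ball x r) Γ.wV

/-- Dirichlet energy of a function. -/
noncomputable def energy (Γ : WeightedGraph V) (f : V → ℝ) : ℝ :=
  (∑' x, ∑' y, (f x - f y) ^ 2 * Γ.wE x y) / 2

/-- Squared `L²`-norm of a function. -/
noncomputable def sqnorm (Γ : WeightedGraph V) (f : V → ℝ) : ℝ :=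
  ∑' x, f x ^ 2 * Γ.wV x

/-- The first Dirichlet eigenvalue of a finite set `Ω`. -/
noncomputable def lambda1 (Γ : WeightedGraph V) (Ω : Finset V) : ℝ :=
  sInf {q | ∃ f : V → ℝ, f ≠ 0 ∧ (∀ x, f x ≠ 0 → x ∈ Ω) ∧ q = Γ.energy f / Γ.sqnorm f}

/-- `Λ` is a relative Faber-Krahn function of `Γ`: for balls `B(z,r)` the map
`ν ↦ Λ z r ν` is non-increasing, and `λ₁(Ω) ≥ Λ(B, π(Ω))` for nonempty finite `Ω ⊆ B`. -/
def IsRelFK (Γ : WeightedGraph V) (Λ : V → ℝ → ℝ → ℝ) : Prop :=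
  (∀ z r ν₁ ν₂, 0 < ν₁ → ν₁ ≤ ν₂ → Λ z r ν₂ ≤ Λ z r ν₁) ∧
  ∀ z : V, ∀ r : ℝ, ∀ Ω : Finset V, Ω.Nonempty → (∀ x ∈ Ω, x ∈ Γ.ball z r) →
    Λ z r (∑ x ∈ Ω, Γ.wV x) ≤ Γ.lambda1 Ω

/-- The heat kernel of the weighted graph. -/
noncomputable def heatKernel (Γ : WeightedGraph V) : ℕ → V → V → ℝ :=
  mheat Γ.wV Γ.wE

/-- `ε`-average of a function over closed balls of radius `ε`. -/
noncomputable def avg (Γ : WeightedGraph V) (ε : ℝ) (f : V → ℝ) (x : V) : ℝ :=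
  setSum (Γ.ball x ε) (fun y => f y * Γ.wV y) / Γ.vol x ε

/-- `Φ` is a quasi-isometry between weighted graphs with constants `ε, a, b, Cq`. -/
structure IsQI {V₁ V₂ : Type*} (Γ₁ : WeightedGraph V₁) (Γ₂ : WeightedGraph V₂)
    (Φ : V₁ → V₂) (ε a b Cq : ℝ) : Prop where
  eps_pos : 0 < ε
  a_pos : 0 < a
  b_nonneg : 0 ≤ b
  Cq_pos : 0 < Cq
  dense : ∀ z : V₂, ∃ x : V₁, (Γ₂.G.dist (Φ x) z : ℝ) ≤ ε
  dist_lower : ∀ x y : V₁, a⁻¹ * (Γ₁.G.dist x y : ℝ) - b ≤ (Γ₂.G.dist (Φ x) (Φ y) : ℝ)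
  dist_upper : ∀ x y : V₁, (Γ₂.G.dist (Φ x) (Φ y) : ℝ) ≤ a * (Γ₁.G.dist x y : ℝ)
  weight_lower : ∀ x, Cq⁻¹ * Γ₁.wV x ≤ Γ₂.wV (Φ x)
  weight_upper : ∀ x, Γ₂.wV (Φ x) ≤ Cq * Γ₁.wV x

end WeightedGraph

/-!
The proof is a De Giorgi iteration. Testing the equation against cutoffs in space and time bounds
the energy of the truncations `(u - θ)⁺` and, at each time, their `L²`-norm (Caccioppoli). By
Chebyshev the latter controls the volume of the superlevel sets of `u`, and there the Faber-Krahn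
inequality turns the energy bound into a bound on the next truncation. Along shrinking cylinders and
increasing levels this is a recursion `Y (k + 1) ≤ A * β ^ k * Y k ^ (1 + α)`, so `Y` decays
geometrically once the top level `θ` exceeds a multiple of the `L²`-mean of `u`. Cutoffs of slope
above `1` are useless on a graph, hence the iteration stops when the spatial step drops to unit
scale; the Faber-Krahn inequality on `{z}` then bounds `π(z)` from below, so the last `Y K` still
controls `(u(T, z) - θ)⁺`.
-/

section Ramp

/-- The piecewise linear ramp, `0` on `(-∞, 0]`, `t` on `[0, 1]` and `1` on `[1, ∞)`, from which
the cutoffs in space and in time are built. -/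
noncomputable def ramp (t : ℝ) : ℝ :=
  Set.projIcc 0 1 zero_le_one t

theorem ramp_nonneg (t : ℝ) : 0 ≤ ramp t :=
  (Set.projIcc (0 : ℝ) 1 zero_le_one t).2.1

theorem ramp_le_one (t : ℝ) : ramp t ≤ 1 :=
  (Set.projIcc (0 : ℝ) 1 zero_le_one t).2.2

theorem ramp_of_nonpos {t : ℝ} (ht : t ≤ 0) : ramp t = 0 := by
  rw [ramp, Set.projIcc_of_le_left _ ht]

theorem ramp_of_one_le {t : ℝ} (ht : 1 ≤ t) : ramp t = 1 := by
  rw [ramp, Set.projIcc_of_right_le _ ht]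

theorem abs_ramp_sub_ramp_le (s t : ℝ) : |ramp s - ramp t| ≤ |s - t| :=
  Set.abs_projIcc_sub_projIcc zero_le_one

end Ramp

section FiniteSums

variable {ι : Type*}

theorem sum_sum_mul_eq_of_symm (S : Finset ι) {m : ι → ι → ℝ} (hm : ∀ x y, m x y = m y x)
    (h : ι → ι → ℝ) :
    ∑ x ∈ S, ∑ y ∈ S, m x y * h x y = ∑ x ∈ S, ∑ y ∈ S, m x y * ((h x y + h y x) / 2) := by
  have hswap : ∑ x ∈ S, ∑ y ∈ S, m x y * h x y = ∑ x ∈ S, ∑ y ∈ S, m x y * h y x := by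
    rw [Finset.sum_comm]
    simp only [hm]
  have hsplit : ∑ x ∈ S, ∑ y ∈ S, m x y * ((h x y + h y x) / 2) =
      (∑ x ∈ S, ∑ y ∈ S, m x y * h x y + ∑ x ∈ S, ∑ y ∈ S, m x y * h y x) / 2 := by
    simp only [← Finset.sum_add_distrib, Finset.sum_div]
    exact Finset.sum_congr rfl fun x _ => Finset.sum_congr rfl fun y _ => by ring
  rw [hsplit, ← hswap]
  ring

theorem sq_sum_mul_le (S : Finset ι) {w : ι → ℝ} (hw : ∀ y ∈ S, 0 ≤ w y) (g : ι → ℝ) :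
    (∑ y ∈ S, w y * g y) ^ 2 ≤ (∑ y ∈ S, w y) * ∑ y ∈ S, w y * g y ^ 2 :=
  Finset.sum_sq_le_sum_mul_sum_of_sq_le_mul S hw
    (fun y hy => mul_nonneg (hw y hy) (sq_nonneg _)) fun y _ => by ring_nf; rfl

theorem mul_sq_le_of_mul_le_add_sum {S : Finset ι} {w q : ι → ℝ} {W c p p' : ℝ} (hW : 0 < W)
    (hw : ∀ y ∈ S, 0 ≤ w y) (hwW : ∑ y ∈ S, w y ≤ (1 - c) * W) (hp' : 0 ≤ p')
    (h : W * p' ≤ W * p + ∑ y ∈ S, w y * (q y - p)) :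
    p' ^ 2 * W ≤ p ^ 2 * W +
      ∑ y ∈ S, w y * (2 * p * (q y - p) + (1 - c) * (q y - p) ^ 2) := by
  set D := ∑ y ∈ S, w y * (q y - p)
  set Q := ∑ y ∈ S, w y * (q y - p) ^ 2
  have hD : D ^ 2 ≤ (1 - c) * W * Q :=
    (sq_sum_mul_le S hw _).trans <| mul_le_mul_of_nonneg_right hwW <|
      Finset.sum_nonneg fun y hy => mul_nonneg (hw y hy) (sq_nonneg _)
  have hsum : ∑ y ∈ S, w y * (2 * p * (q y - p) + (1 - c) * (q y - p) ^ 2) =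
      2 * p * D + (1 - c) * Q := by
    simp only [D, Q, Finset.mul_sum, ← Finset.sum_add_distrib]
    exact Finset.sum_congr rfl fun y _ => by ring
  have hsq : (W * p') ^ 2 ≤ (W * p + D) ^ 2 := pow_le_pow_left₀ (mul_nonneg hW.le hp') h 2
  rw [hsum]
  refine le_of_mul_le_mul_left ?_ hW
  linarith

theorem cutoff_product_le {c : ℝ} (hc : 0 < c) (a b p q : ℝ) :
    (1 - c) * ((a ^ 2 + b ^ 2) / 2 * (q - p) ^ 2) - (b ^ 2 * q - a ^ 2 * p) * (q - p) ≤
      (1 / c + c / 4) * ((a - b) ^ 2 * (p ^ 2 + q ^ 2)) - c / 4 * (a * p - b * q) ^ 2 := by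
  have hdiff : (1 / c + c / 4) * ((a - b) ^ 2 * (p ^ 2 + q ^ 2)) - c / 4 * (a * p - b * q) ^ 2 -
      ((1 - c) * ((a ^ 2 + b ^ 2) / 2 * (q - p) ^ 2) - (b ^ 2 * q - a ^ 2 * p) * (q - p)) =
      c / 16 * ((a + b) * (q - p) - (b - a) * (p + q)) ^ 2 +
      1 / (8 * c) * (c * ((a + b) * (q - p)) + 2 * ((b - a) * (p + q))) ^ 2 +
      (3 * c / 8 + 1 / (2 * c)) * ((b - a) * (q - p)) ^ 2 := by
    field_simp
    ring
  have : 0 ≤ c / 16 * ((a + b) * (q - p) - (b - a) * (p + q)) ^ 2 +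
      1 / (8 * c) * (c * ((a + b) * (q - p)) + 2 * ((b - a) * (p + q))) ^ 2 +
      (3 * c / 8 + 1 / (2 * c)) * ((b - a) * (q - p)) ^ 2 := by positivity
  linarith

/-- The Caccioppoli inequality for one time step. -/
theorem sum_sq_cutoff_step_le {S : Finset ι} {m : ι → ι → ℝ} {W η v v' : ι → ℝ} {c : ℝ}
    (hc : 0 < c) (hW : ∀ x, 0 < W x) (hm : ∀ x y, 0 ≤ m x y) (hsymm : ∀ x y, m x y = m y x)
    (hlazy : ∀ x, ∑ y ∈ S, m x y ≤ (1 - c) * W x) (hv' : ∀ x, 0 ≤ v' x)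
    (hsub : ∀ x ∈ S, η x ≠ 0 → W x * v' x ≤ W x * v x + ∑ y ∈ S, m x y * (v y - v x)) :
    ∑ x ∈ S, (η x * v' x) ^ 2 * W x + c / 4 * ∑ x ∈ S, ∑ y ∈ S,
        m x y * (η x * v x - η y * v y) ^ 2 ≤
      ∑ x ∈ S, (η x * v x) ^ 2 * W x + (2 / c + c / 2) * ∑ x ∈ S, ∑ y ∈ S,
        m x y * ((η x - η y) ^ 2 * v x ^ 2) := by
  have hvertex : ∑ x ∈ S, (η x * v' x) ^ 2 * W x ≤ ∑ x ∈ S, (η x * v x) ^ 2 * W x +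
      ∑ x ∈ S, ∑ y ∈ S, m x y *
        (η x ^ 2 * (2 * v x * (v y - v x) + (1 - c) * (v y - v x) ^ 2)) := by
    rw [← Finset.sum_add_distrib]
    refine Finset.sum_le_sum fun x hx => ?_
    rcases eq_or_ne (η x) 0 with hη | hη
    · simp [hη]
    have hstep := mul_le_mul_of_nonneg_left
      (mul_sq_le_of_mul_le_add_sum (hW x) (fun y _ => hm x y) (hlazy x) (hv' x) (hsub x hx hη))
      (sq_nonneg (η x))
    rw [mul_add, Finset.mul_sum] at hstep
    simp only [mul_pow, mul_assoc, mul_left_comm (m x _)] at hstep ⊢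
    exact hstep
  have hedge : ∑ x ∈ S, ∑ y ∈ S, m x y *
        (η x ^ 2 * (2 * v x * (v y - v x) + (1 - c) * (v y - v x) ^ 2)) ≤
      (2 / c + c / 2) * ∑ x ∈ S, ∑ y ∈ S, m x y * ((η x - η y) ^ 2 * v x ^ 2) -
        c / 4 * ∑ x ∈ S, ∑ y ∈ S, m x y * (η x * v x - η y * v y) ^ 2 := by
    rw [sum_sum_mul_eq_of_symm S hsymm, sum_sum_mul_eq_of_symm S hsymm fun x y =>
      (η x - η y) ^ 2 * v x ^ 2]
    simp only [Finset.mul_sum, ← Finset.sum_sub_distrib]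
    refine Finset.sum_le_sum fun x _ => Finset.sum_le_sum fun y _ => ?_
    convert mul_le_mul_of_nonneg_left (cutoff_product_le hc (η x) (η y) (v x) (v y)) (hm x y)
      using 1 <;> ring
  linarith

end FiniteSums

section TimeCutoff

theorem sum_range_ite_eq_sum_Icc_ceil (s : ℝ) (T : ℕ) (f : ℕ → ℝ) :
    ∑ k ∈ Finset.range (T + 1), (if s ≤ k then f k else 0) = ∑ k ∈ Finset.Icc ⌈s⌉₊ T, f k := by
  rw [← Finset.sum_filter]
  congr 1
  ext k
  simp [Nat.ceil_le, and_comm]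

theorem ramp_sub_mul_add_ramp_mul_le {s σ D A j : ℝ} (hσ : 0 < σ) (hD : 0 ≤ D) (hA : 0 ≤ A)
    (hAj : A ≤ j) (t : ℝ) :
    (ramp ((t - s) / σ) - ramp ((t - 1 - s) / σ)) * A + ramp ((t - s) / σ) * (D * j) ≤
      if s ≤ t then (1 / σ + D) * j else 0 := by
  split_ifs with hst
  · have hincr : ramp ((t - s) / σ) - ramp ((t - 1 - s) / σ) ≤ 1 / σ := by
      refine (le_abs_self _).trans ((abs_ramp_sub_ramp_le _ _).trans_eq ?_)
      rw [← sub_div, abs_div, abs_of_pos hσ]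
      norm_num
    rw [add_mul]
    exact add_le_add (mul_le_mul hincr hAj hA (by positivity))
      (mul_le_of_le_one_left (mul_nonneg hD (hA.trans hAj)) (ramp_le_one _))
  · rw [ramp_of_nonpos (div_nonpos_of_nonpos_of_nonneg (by linarith) hσ.le),
      ramp_of_nonpos (div_nonpos_of_nonpos_of_nonneg (by linarith) hσ.le)]
    simp

variable {T : ℕ} {s σ c D : ℝ} {A E j : ℕ → ℝ}

theorem ramp_mul_add_sum_ramp_mul_le (hs : 0 ≤ s) (hσ : 0 < σ) (hD : 0 ≤ D) (hA : ∀ n, 0 ≤ A n)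
    (hAj : ∀ n, A n ≤ j n) (hstep : ∀ n ≤ T, A (n + 1) + c * E n ≤ A n + D * j n) {N : ℕ}
    (hN : N ≤ T + 1) :
    ramp ((N - 1 - s) / σ) * A N + c * ∑ n ∈ Finset.range N, ramp ((n - s) / σ) * E n ≤
      ∑ k ∈ Finset.range N, if s ≤ k then (1 / σ + D) * j k else 0 := by
  induction N with
  | zero =>
    rw [ramp_of_nonpos (div_nonpos_of_nonpos_of_nonneg (by push_cast; linarith) hσ.le)]
    simp
  | succ N ih =>
    have hstepN := mul_le_mul_of_nonneg_left (hstep N (by omega)) (ramp_nonneg ((N - s) / σ))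
    have hramp := ramp_sub_mul_add_ramp_mul_le (s := s) hσ hD (hA N) (hAj N) N
    rw [Finset.sum_range_succ, Finset.sum_range_succ]
    push_cast
    rw [add_sub_cancel_right]
    linarith [ih (by omega)]

theorem le_sum_of_le_add (hs : 0 ≤ s) (hσ : 0 < σ) (hc : 0 ≤ c) (hD : 0 ≤ D) (hA : ∀ n, 0 ≤ A n)
    (hE : ∀ n, 0 ≤ E n) (hAj : ∀ n, A n ≤ j n)
    (hstep : ∀ n ≤ T, A (n + 1) + c * E n ≤ A n + D * j n) {n : ℕ} (hn : n ≤ T)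
    (hsn : s + σ ≤ n) :
    A n ≤ (1 / σ + D) * ∑ k ∈ Finset.Icc ⌈s⌉₊ T, j k := by
  have hj : ∀ k, 0 ≤ j k := fun k => (hA k).trans (hAj k)
  have hbefore := ramp_mul_add_sum_ramp_mul_le hs hσ hD hA hAj hstep (N := n) (by omega)
  have hramp := ramp_sub_mul_add_ramp_mul_le (s := s) hσ hD (hA n) (hAj n) n
  rw [ramp_of_one_le ((one_le_div hσ).2 (by linarith) : 1 ≤ ((n : ℝ) - s) / σ)] at hramp
  have hEsum : 0 ≤ c * ∑ n ∈ Finset.range n, ramp ((n - s) / σ) * E n :=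
    mul_nonneg hc (Finset.sum_nonneg fun k _ => mul_nonneg (ramp_nonneg _) (hE k))
  have hmono : ∑ k ∈ Finset.range (n + 1), (if s ≤ k then (1 / σ + D) * j k else 0) ≤
      ∑ k ∈ Finset.range (T + 1), if s ≤ k then (1 / σ + D) * j k else 0 := by
    refine Finset.sum_le_sum_of_subset_of_nonneg (by gcongr) fun k _ _ => ?_
    have := hj k
    split_ifs <;> positivity
  rw [Finset.sum_range_succ] at hmono
  rw [Finset.mul_sum, ← sum_range_ite_eq_sum_Icc_ceil]
  linarith [mul_nonneg hD (hj n)]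

theorem mul_sum_le_sum_of_le_add (hs : 0 ≤ s) (hσ : 0 < σ) (hc : 0 ≤ c) (hD : 0 ≤ D)
    (hA : ∀ n, 0 ≤ A n) (hE : ∀ n, 0 ≤ E n) (hAj : ∀ n, A n ≤ j n)
    (hstep : ∀ n ≤ T, A (n + 1) + c * E n ≤ A n + D * j n) :
    c * ∑ k ∈ Finset.Icc ⌈s + σ⌉₊ T, E k ≤
      (1 / σ + D) * ∑ k ∈ Finset.Icc ⌈s⌉₊ T, j k := by
  have hall := ramp_mul_add_sum_ramp_mul_le hs hσ hD hA hAj hstep (N := T + 1) le_rfl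
  have hplateau : ∑ k ∈ Finset.Icc ⌈s + σ⌉₊ T, E k ≤
      ∑ n ∈ Finset.range (T + 1), ramp ((n - s) / σ) * E n := by
    rw [← sum_range_ite_eq_sum_Icc_ceil]
    refine Finset.sum_le_sum fun n _ => ?_
    split_ifs with h
    · rw [ramp_of_one_le ((one_le_div hσ).2 (by linarith)), one_mul]
    · exact mul_nonneg (ramp_nonneg _) (hE n)
  rw [sum_range_ite_eq_sum_Icc_ceil, ← Finset.mul_sum] at hall
  linarith [mul_le_mul_of_nonneg_left hplateau hc,
    mul_nonneg (ramp_nonneg (((T + 1 : ℕ) - 1 - s) / σ)) (hA (T + 1))]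

end TimeCutoff

section Recursion

theorem le_pow_mul_of_superlinear_recursion {Y : ℕ → ℝ} {A β q α : ℝ} {K : ℕ} (hα : 0 ≤ α)
    (hA : 0 ≤ A) (hβ : 0 ≤ β) (hq : 0 ≤ q) (hY : ∀ k, 0 ≤ Y k)
    (hrec : ∀ k < K, Y (k + 1) ≤ A * β ^ k * Y k ^ α * Y k) (hstart : A * Y 0 ^ α ≤ q)
    (hqβ : q ^ α * β ≤ 1) {k : ℕ} (hk : k ≤ K) : Y k ≤ q ^ k * Y 0 := by
  induction k with
  | zero => simp
  | succ k ih =>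
    have hYk := ih (by omega)
    have hfactor : A * β ^ k * Y k ^ α ≤ q :=
      calc A * β ^ k * Y k ^ α ≤ A * β ^ k * (q ^ k * Y 0) ^ α := by
            gcongr
            exact hY k
        _ = (q ^ α * β) ^ k * (A * Y 0 ^ α) := by
            rw [Real.mul_rpow (by positivity) (hY 0), ← Real.rpow_pow_comm hq, mul_pow]
            ring
        _ ≤ 1 * q := by
            have := Real.rpow_nonneg (hY 0) α
            gcongr
            exact pow_le_one₀ (by positivity) hqβ
        _ = q := one_mul q
    calc Y (k + 1) ≤ A * β ^ k * Y k ^ α * Y k := hrec k (by omega)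
      _ ≤ q * (q ^ k * Y 0) := by
          gcongr
          exact hY k
      _ = q ^ (k + 1) * Y 0 := by ring

theorem exists_dyadic_scale (R : ℝ) : ∃ K : ℕ, (∀ k < K, 16 * 2 ^ k ≤ R) ∧ R < 16 * 2 ^ K := by
  classical
  have hex : ∃ K : ℕ, R < 16 * 2 ^ K := by
    obtain ⟨K, hK⟩ := pow_unbounded_of_one_lt (R / 16) one_lt_two
    exact ⟨K, (div_lt_iff₀' (by norm_num)).1 hK⟩
  exact ⟨Nat.find hex, fun k hk => not_lt.1 (Nat.find_min hex hk), Nat.find_spec hex⟩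

theorem one_div_sixteen_rpow_pow_le {R τ p : ℝ} {K : ℕ} (hτ : 0 < τ) (hτR : τ ≤ R ^ 2) (hR : 0 ≤ R)
    (hp : 0 ≤ p) (hK : R < 16 * 2 ^ K) : ((1 / 16 : ℝ) ^ p) ^ K ≤ (256 / τ) ^ p := by
  rw [Real.rpow_pow_comm (by norm_num)]
  refine Real.rpow_le_rpow (by positivity) ?_ hp
  have hpow : τ ≤ 256 * 16 ^ K :=
    calc τ ≤ R ^ 2 := hτR
      _ ≤ (16 * 2 ^ K) ^ 2 := by gcongr
      _ = 256 * 4 ^ K := by rw [mul_pow, pow_right_comm]; norm_num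
      _ ≤ 256 * 16 ^ K := by gcongr; norm_num
  rw [one_div_pow, div_le_div_iff₀ (by positivity) hτ, one_mul]
  exact hpow

theorem rpow_mul_rpow_mul_four_le_one {α : ℝ} (hα : 0 < α) :
    ((1 / 16 : ℝ) ^ (1 + 1 / α)) ^ α * (16 ^ α * 4) ≤ 1 := by
  rw [← Real.rpow_mul (by norm_num), add_mul, one_mul, div_mul_cancel₀ _ hα.ne',
    Real.rpow_add_one (by norm_num), Real.div_rpow (by norm_num) (by norm_num), Real.one_rpow]
  field_simp
  norm_num

theorem mul_threshold_rpow_eq {L b τ q α J θ : ℝ} (hL : 0 < L) (hb : 0 < b) (hτ : 0 < τ)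
    (hq : 0 < q) (hα : 0 < α) (hJ : 0 < J)
    (hθ : θ ^ 2 = 4 * L * (L / q) ^ (1 / α) / (b ^ (1 / α) * τ ^ (1 + 1 / α)) * J) :
    L / (b * τ) * (4 * L / (τ * θ ^ 2)) ^ α * J ^ α = q := by
  have hbase : 4 * L / (τ * θ ^ 2) * J = (b * τ / (L / q)) ^ (1 / α) := by
    have : 0 < (L / q) ^ (1 / α) := by positivity
    rw [Real.div_rpow (by positivity) (by positivity), Real.mul_rpow hb.le hτ.le, hθ,
      Real.rpow_add hτ, Real.rpow_one]
    field_simp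
  rw [mul_assoc, ← Real.mul_rpow (by positivity) hJ.le, hbase, ← Real.rpow_mul (by positivity),
    one_div_mul_cancel hα.ne', Real.rpow_one]
  field_simp

theorem one_div_add_one_div_sq_le {T R τ : ℝ} (hτ : 0 < τ) (hτT : τ ≤ T) (hτR : τ ≤ R ^ 2)
    (k : ℕ) :
    1 / (T / 8 * (1 / 2) ^ k) + 1 / (R / 16 * (1 / 2) ^ k) ^ 2 ≤ 264 * 4 ^ k / τ := by
  have htime : 1 / (T / 8 * (1 / 2) ^ k) ≤ 8 * 4 ^ k / τ :=
    calc 1 / (T / 8 * (1 / 2) ^ k) = 8 * 2 ^ k / T := by rw [one_div_pow]; field_simp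
      _ ≤ 8 * 4 ^ k / τ := by gcongr; norm_num
  have hspace : 1 / (R / 16 * (1 / 2) ^ k) ^ 2 ≤ 256 * 4 ^ k / τ :=
    calc 1 / (R / 16 * (1 / 2) ^ k) ^ 2 = 256 * 4 ^ k / R ^ 2 := by
          rw [one_div_pow, show (4 : ℝ) ^ k = (2 ^ k) ^ 2 by rw [pow_right_comm]; norm_num]
          field_simp
          norm_num
      _ ≤ 256 * 4 ^ k / τ := by gcongr
  calc _ ≤ 8 * 4 ^ k / τ + 256 * 4 ^ k / τ := add_le_add htime hspace
    _ = 264 * 4 ^ k / τ := by ring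

theorem one_div_add_four_div_le {c σ δ : ℝ} (hc : 0 < c) (hc1 : c ≤ 1) (hσ : 0 < σ)
    (hδ : 0 < δ) :
    1 / σ + 4 / (c * δ ^ 2) ≤ c / 2 * (8 / c ^ 2 * (1 / σ + 1 / δ ^ 2)) := by
  have h4c : 1 ≤ 4 / c := (one_le_div hc).2 (by linarith)
  calc 1 / σ + 4 / (c * δ ^ 2) ≤ 4 / c * (1 / σ) + 4 / (c * δ ^ 2) := by
        gcongr
        exact le_mul_of_one_le_left (by positivity) h4c
    _ = c / 2 * (8 / c ^ 2 * (1 / σ + 1 / δ ^ 2)) := by field_simp; ring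

theorem rpow_mul_div_eq_pow_mul {L b τ θ α y : ℝ} (hL : 0 ≤ L) (hτ : 0 ≤ τ) (hy : 0 ≤ y)
    (k : ℕ) :
    (L * (4 ^ k / τ) * y / (θ / 2 * (1 / 2) ^ k) ^ 2) ^ α * (L * (4 ^ k / τ) * y) / b =
      L / (b * τ) * (4 * L / (τ * θ ^ 2)) ^ α * (16 ^ α * 4) ^ k * y ^ α * y := by
  have hbase : L * (4 ^ k / τ) * y / (θ / 2 * (1 / 2) ^ k) ^ 2 =
      4 * L / (τ * θ ^ 2) * 16 ^ k * y := by
    rw [one_div_pow, show (16 : ℝ) ^ k = 4 ^ k * (2 ^ k) ^ 2 by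
      rw [pow_right_comm, ← mul_pow]; norm_num]
    field_simp
    norm_num
  rw [hbase, Real.mul_rpow (by positivity) hy, Real.mul_rpow (by positivity) (by positivity),
    ← Real.rpow_pow_comm (by norm_num), mul_pow]
  field_simp

theorem rpow_mul_rpow_min_eq {a F R T α : ℝ} (ha : 0 ≤ a) (hF : 0 ≤ F) (hR : 0 < R)
    (hT : 0 ≤ T) (hα : 0 < α) :
    (a / R ^ 2 * F ^ α) ^ (1 / α) * min T (R ^ 2) ^ (1 + 1 / α) =
      a ^ (1 / α) * (F * min (T ^ (1 + 1 / α) * R ^ (-(2 / α))) (R ^ 2)) := by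
  have hRpow : (R ^ 2) ^ (1 / α) = R ^ (2 / α) := by
    rw [← Real.rpow_natCast_mul hR.le, Nat.cast_two, mul_one_div]
  have hmin : min (T ^ (1 + 1 / α) * R ^ (-(2 / α))) (R ^ 2) =
      min T (R ^ 2) ^ (1 + 1 / α) * R ^ (-(2 / α)) := by
    have hR2 : R ^ 2 = (R ^ 2) ^ (1 + 1 / α) * R ^ (-(2 / α)) := by
      rw [Real.rpow_add (by positivity), Real.rpow_one, hRpow, mul_assoc, ← Real.rpow_add hR,
        add_neg_cancel, Real.rpow_zero, mul_one]
    have hmono : MonotoneOn (fun x : ℝ => x ^ (1 + 1 / α)) (Set.Ici 0) :=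
      Real.monotoneOn_rpow_Ici_of_exponent_nonneg (by positivity)
    rw [hmono.map_min hT (sq_nonneg R), min_mul_of_nonneg _ _ (by positivity), ← hR2]
  rw [hmin, Real.mul_rpow (by positivity) (by positivity), Real.div_rpow ha (sq_nonneg R), hRpow,
    ← Real.rpow_mul hF, mul_one_div_cancel hα.ne', Real.rpow_one, Real.rpow_neg hR.le]
  field_simp

end Recursion

namespace WeightedGraph

variable {V : Type*} {Γ : WeightedGraph V}

section Basic

theorem wE_eq_zero_of_not_adj {x y : V} (h : ¬ Γ.G.Adj x y) : Γ.wE x y = 0 :=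
  le_antisymm (not_lt.1 fun hpos => h ((Γ.adapted x y).1 hpos)) (Γ.wE_nonneg x y)

theorem sum_wE_le_tsum (S : Finset V) (x : V) : ∑ y ∈ S, Γ.wE x y ≤ ∑' y, Γ.wE x y :=
  (Γ.wE_summable x).sum_le_tsum S fun y _ => Γ.wE_nonneg x y

theorem sum_wE_le_wV (S : Finset V) (x : V) : ∑ y ∈ S, Γ.wE x y ≤ Γ.wV x :=
  (sum_wE_le_tsum S x).trans (Γ.subordinate x)

theorem energy_nonneg (f : V → ℝ) : 0 ≤ Γ.energy f :=
  div_nonneg (tsum_nonneg fun _ => tsum_nonneg fun _ => mul_nonneg (sq_nonneg _)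
    (Γ.wE_nonneg _ _)) zero_le_two

theorem sqnorm_nonneg (f : V → ℝ) : 0 ≤ Γ.sqnorm f :=
  tsum_nonneg fun x => mul_nonneg (sq_nonneg _) (Γ.wV_pos x).le

variable (Γ) in
/-- The squared `L²(A)`-norm of `f`, for a finite set `A` of vertices. -/
def sqnormOn (A : Finset V) (f : V → ℝ) : ℝ :=
  ∑ x ∈ A, f x ^ 2 * Γ.wV x

theorem sqnormOn_nonneg (A : Finset V) (f : V → ℝ) : 0 ≤ Γ.sqnormOn A f :=
  Finset.sum_nonneg fun x _ => mul_nonneg (sq_nonneg _) (Γ.wV_pos x).le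

theorem sqnormOn_le_sqnormOn {A B : Finset V} {f g : V → ℝ} (hAB : A ⊆ B)
    (hfg : ∀ x ∈ A, f x ^ 2 ≤ g x ^ 2) : Γ.sqnormOn A f ≤ Γ.sqnormOn B g :=
  (Finset.sum_le_sum fun x hx => mul_le_mul_of_nonneg_right (hfg x hx) (Γ.wV_pos x).le).trans <|
    Finset.sum_le_sum_of_subset_of_nonneg hAB fun x _ _ => mul_nonneg (sq_nonneg _) (Γ.wV_pos x).le

theorem sqnorm_eq_sqnormOn {S : Finset V} {f : V → ℝ} (hf : ∀ x ∉ S, f x = 0) :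
    Γ.sqnorm f = Γ.sqnormOn S f :=
  tsum_eq_sum fun x hx => by simp [hf x hx]

theorem energy_eq_sum {S : Finset V} {f : V → ℝ} (hf : ∀ x ∉ S, f x = 0)
    (hadj : ∀ x y, f x ≠ 0 → Γ.G.Adj x y → y ∈ S) :
    Γ.energy f = (∑ x ∈ S, ∑ y ∈ S, Γ.wE x y * (f x - f y) ^ 2) / 2 := by
  have hout : ∀ x y, x ∉ S ∨ y ∉ S → Γ.wE x y * (f x - f y) ^ 2 = 0 := by
    intro x y hxy
    by_cases h : Γ.G.Adj x y
    · have hx : f x = 0 := by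
        by_contra hx
        exact hxy.elim (fun hxS => hx (hf x hxS)) fun hyS => hyS (hadj x y hx h)
      have hy : f y = 0 := by
        by_contra hy
        exact hxy.elim (fun hxS => hxS (hadj y x hy h.symm)) fun hyS => hy (hf y hyS)
      simp [hx, hy]
    · simp [wE_eq_zero_of_not_adj h]
  simp only [energy, mul_comm _ (Γ.wE _ _)]
  rw [tsum_eq_sum (s := S) fun x hx => by simp [hout x _ (Or.inl hx)]]
  exact congrArg (· / 2) <| Finset.sum_congr rfl fun x _ =>
    tsum_eq_sum fun y hy => hout x y (Or.inr hy)

theorem energy_le_sqnorm {S : Finset V} {f : V → ℝ} (hf : ∀ x ∉ S, f x = 0)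
    (hadj : ∀ x y, f x ≠ 0 → Γ.G.Adj x y → y ∈ S) (hf₀ : ∀ x, 0 ≤ f x) :
    Γ.energy f ≤ Γ.sqnorm f := by
  rw [energy_eq_sum hf hadj, sqnorm_eq_sqnormOn hf, Finset.sum_div]
  calc ∑ x ∈ S, (∑ y ∈ S, Γ.wE x y * (f x - f y) ^ 2) / 2
      ≤ ∑ x ∈ S, ∑ y ∈ S, Γ.wE x y * ((f x ^ 2 + f y ^ 2) / 2) := by
        refine Finset.sum_le_sum fun x _ => ?_
        rw [Finset.sum_div]
        refine Finset.sum_le_sum fun y _ => ?_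
        rw [mul_div_assoc]
        refine mul_le_mul_of_nonneg_left ?_ (Γ.wE_nonneg x y)
        linarith [mul_nonneg (hf₀ x) (hf₀ y), sub_sq (f x) (f y)]
    _ = ∑ x ∈ S, f x ^ 2 * ∑ y ∈ S, Γ.wE x y := by
        rw [← sum_sum_mul_eq_of_symm S Γ.wE_symm fun x _ => f x ^ 2]
        simp only [Finset.mul_sum, mul_comm]
    _ ≤ Γ.sqnormOn S f :=
        Finset.sum_le_sum fun x _ => mul_le_mul_of_nonneg_left (sum_wE_le_wV S x) (sq_nonneg _)

theorem sum_wE_mul_sq_sub_mul_le {κ : ℝ} {η : V → ℝ}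
    (hη : ∀ x y, Γ.G.Adj x y → |η x - η y| ≤ κ) (S : Finset V) (v : V → ℝ) :
    ∑ x ∈ S, ∑ y ∈ S, Γ.wE x y * ((η x - η y) ^ 2 * v x ^ 2) ≤ κ ^ 2 * Γ.sqnormOn S v := by
  rw [sqnormOn, Finset.mul_sum]
  refine Finset.sum_le_sum fun x _ => ?_
  calc ∑ y ∈ S, Γ.wE x y * ((η x - η y) ^ 2 * v x ^ 2)
      ≤ ∑ y ∈ S, Γ.wE x y * (κ ^ 2 * v x ^ 2) := by
        refine Finset.sum_le_sum fun y _ => ?_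
        by_cases h : Γ.G.Adj x y
        · have := sq_le_sq' (abs_le.1 (hη x y h)).1 (abs_le.1 (hη x y h)).2
          have := Γ.wE_nonneg x y
          gcongr
        · simp [wE_eq_zero_of_not_adj h]
    _ ≤ κ ^ 2 * (v x ^ 2 * Γ.wV x) := by
        rw [← Finset.sum_mul, mul_comm, mul_assoc]
        gcongr
        exact sum_wE_le_wV S x

theorem sqnorm_mul_add_energy_mul_le {c κ : ℝ} (hlazy : Γ.UniformlyLazy c) {S : Finset V}
    {η v v' : V → ℝ} (hηS : ∀ x ∉ S, η x = 0) (hadj : ∀ x y, η x ≠ 0 → Γ.G.Adj x y → y ∈ S)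
    (hη : ∀ x y, Γ.G.Adj x y → |η x - η y| ≤ κ) (hv' : ∀ x, 0 ≤ v' x)
    (hsub : ∀ x, η x ≠ 0 →
      Γ.wV x * v' x ≤ Γ.wV x * v x + ∑ y ∈ S, Γ.wE x y * (v y - v x)) :
    Γ.sqnorm (fun x => η x * v' x) + c / 2 * Γ.energy (fun x => η x * v x) ≤
      Γ.sqnorm (fun x => η x * v x) + 4 * κ ^ 2 / c * Γ.sqnormOn S v := by
  obtain ⟨⟨hc, hc1⟩, hlazy⟩ := hlazy
  have hconst : 2 / c + c / 2 ≤ 4 / c := by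
    rw [← sub_nonneg, show 4 / c - (2 / c + c / 2) = (4 - c ^ 2) / (2 * c) by field_simp; ring]
    exact div_nonneg (by nlinarith) (by positivity)
  have hstep := sum_sq_cutoff_step_le hc Γ.wV_pos Γ.wE_nonneg Γ.wE_symm
    (fun x => (sum_wE_le_tsum S x).trans (hlazy x)) hv' fun x _ => hsub x
  rw [sqnorm_eq_sqnormOn (S := S) fun x hx => by simp [hηS x hx],
    sqnorm_eq_sqnormOn (S := S) fun x hx => by simp [hηS x hx],
    energy_eq_sum (S := S) (fun x hx => by simp [hηS x hx])
      fun x y hx => hadj x y (left_ne_zero_of_mul hx)]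
  have hgrad : (2 / c + c / 2) * ∑ x ∈ S, ∑ y ∈ S, Γ.wE x y * ((η x - η y) ^ 2 * v x ^ 2) ≤
      4 * κ ^ 2 / c * Γ.sqnormOn S v :=
    calc _ ≤ 4 / c * (κ ^ 2 * Γ.sqnormOn S v) :=
          mul_le_mul hconst (sum_wE_mul_sq_sub_mul_le hη S v)
            (Finset.sum_nonneg fun x _ => Finset.sum_nonneg fun y _ =>
              mul_nonneg (Γ.wE_nonneg x y) (by positivity)) (by positivity)
      _ = 4 * κ ^ 2 / c * Γ.sqnormOn S v := by ring
  unfold sqnormOn at hgrad ⊢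
  linarith

end Basic

section Subsolution

variable (Γ) in
/-- `u` is a subsolution of the discrete heat equation on the space-time cylinder
`{0, …, T} × B`. -/
def IsSubsolution (T : ℕ) (B : Set V) (u : ℕ → V → ℝ) : Prop :=
  ∀ n ≤ T, ∀ x ∈ B, u (n + 1) x - u n x ≤ ∑' y, mkernel Γ.wV Γ.wE x y * (u n y - u n x)

theorem IsSubsolution.mono {T T' : ℕ} {B B' : Set V} {u : ℕ → V → ℝ}
    (hu : Γ.IsSubsolution T B u) (hT : T' ≤ T) (hB : B' ⊆ B) : Γ.IsSubsolution T' B' u :=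
  fun n hn x hx => hu n (hn.trans hT) x (hB hx)

theorem sub_le_tsum_mkernel_iff {S : Finset V} {x : V} (hS : ∀ y, Γ.G.Adj x y → y ∈ S) (t : ℝ)
    (f : V → ℝ) :
    t - f x ≤ ∑' y, mkernel Γ.wV Γ.wE x y * (f y - f x) ↔
      Γ.wV x * t ≤ Γ.wV x * f x + ∑ y ∈ S, Γ.wE x y * (f y - f x) := by
  have hkernel : ∀ y, mkernel Γ.wV Γ.wE x y * (f y - f x) =
      (Γ.wV x)⁻¹ * (Γ.wE x y * (f y - f x)) := by
    intro y
    rcases eq_or_ne x y with rfl | hxy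
    · simp
    · rw [mkernel, if_neg hxy]
      ring
  have hsum : ∑' y, Γ.wE x y * (f y - f x) = ∑ y ∈ S, Γ.wE x y * (f y - f x) :=
    tsum_eq_sum fun y hy => by rw [wE_eq_zero_of_not_adj fun h => hy (hS y h), zero_mul]
  simp only [hkernel]
  rw [tsum_mul_left, hsum, le_inv_mul_iff₀ (Γ.wV_pos x), mul_sub, sub_le_iff_le_add']

theorem IsSubsolution.posPart_sub [Γ.G.LocallyFinite] {T : ℕ} {B : Set V} {u : ℕ → V → ℝ}
    (hu : Γ.IsSubsolution T B u) (θ : ℝ) : Γ.IsSubsolution T B fun n x => (u n x - θ)⁺ := by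
  intro n hn x hx
  have hS : ∀ y, Γ.G.Adj x y → y ∈ Γ.G.neighborFinset x := fun y => by simp
  have hux := (sub_le_tsum_mkernel_iff hS _ _).1 (hu n hn x hx)
  refine (sub_le_tsum_mkernel_iff hS (u (n + 1) x - θ)⁺ fun y => (u n y - θ)⁺).2 ?_
  simp only [mul_sub (Γ.wE x _), Finset.sum_sub_distrib, ← Finset.sum_mul] at hux ⊢
  set S := Γ.G.neighborFinset x
  have hM : 0 ≤ Γ.wV x - ∑ y ∈ S, Γ.wE x y := sub_nonneg.2 (sum_wE_le_wV S x)
  have hcenter := mul_le_mul_of_nonneg_left (le_posPart (u n x - θ)) hM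
  have hcenter₀ := mul_nonneg hM (posPart_nonneg (u n x - θ))
  have hnbrs : ∑ y ∈ S, Γ.wE x y * u n y - (∑ y ∈ S, Γ.wE x y) * θ ≤
      ∑ y ∈ S, Γ.wE x y * (u n y - θ)⁺ := by
    rw [Finset.sum_mul, ← Finset.sum_sub_distrib]
    refine Finset.sum_le_sum fun y _ => ?_
    rw [← mul_sub]
    exact mul_le_mul_of_nonneg_left (le_posPart _) (Γ.wE_nonneg x y)
  have hnbrs₀ : 0 ≤ ∑ y ∈ S, Γ.wE x y * (u n y - θ)⁺ :=
    Finset.sum_nonneg fun y _ => mul_nonneg (Γ.wE_nonneg x y) (posPart_nonneg _)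
  rw [posPart_def (u (n + 1) x - θ), mul_max_of_nonneg _ _ (Γ.wV_pos x).le, mul_zero]
  exact max_le (by linarith) (by linarith)

end Subsolution

section Balls

theorem finite_neighborSet_of_controlled {C : ℝ} (hΓ : Γ.Controlled C) (x : V) :
    (Γ.G.neighborSet x).Finite := by
  have hC : 0 < C := zero_lt_one.trans hΓ.1
  have hsmall := (Γ.wE_summable x).tendsto_cofinite_zero.eventually
    (gt_mem_nhds (div_pos (Γ.wV_pos x) hC))
  refine (Filter.eventually_cofinite.1 hsmall).subset fun y hy => not_lt.2 ?_
  exact (div_le_iff₀' hC).2 (hΓ.2 x y hy)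

theorem ball_mono (z : V) {r r' : ℝ} (h : r ≤ r') : Γ.ball z r ⊆ Γ.ball z r' :=
  Set.ofPred_subset_ofPred.2 fun _ hx => hx.trans h

theorem dist_le_dist_add_one {x y : V} (z : V) (h : Γ.G.Adj x y) :
    (Γ.G.dist z y : ℝ) ≤ Γ.G.dist z x + 1 := by
  have := Γ.connected.dist_triangle (u := z) (v := x) (w := y)
  rw [SimpleGraph.dist_eq_one_iff_adj.2 h] at this
  exact_mod_cast this

variable [Γ.G.LocallyFinite]

theorem finite_setOf_dist_le (z : V) (n : ℕ) : {x | Γ.G.dist z x ≤ n}.Finite := by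
  induction n with
  | zero =>
    refine (Set.finite_singleton z).subset fun x hx => ?_
    exact (Γ.connected.dist_eq_zero_iff.1 (Nat.le_zero.1 hx)).symm
  | succ n ih =>
    refine (ih.union (ih.biUnion fun y _ => (Γ.G.neighborSet y).toFinite)).subset fun x hx => ?_
    obtain ⟨p, hp⟩ := Γ.connected.exists_walk_length_eq_dist x z
    rw [SimpleGraph.dist_comm] at hp
    cases p with
    | nil => exact Or.inl (by simp)
    | @cons _ y _ hxy p =>
      refine Or.inr (Set.mem_biUnion (x := y) ?_ hxy.symm)
      have hy := SimpleGraph.dist_le p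
      simp only [SimpleGraph.Walk.length_cons, Set.mem_ofPred_eq] at hp hx
      rw [Set.mem_ofPred_eq, SimpleGraph.dist_comm]
      omega

theorem finite_ball (z : V) (r : ℝ) : (Γ.ball z r).Finite :=
  (finite_setOf_dist_le z ⌊r⌋₊).subset fun _ hx => Nat.le_floor hx

variable (Γ) in
/-- The closed ball of a locally finite weighted graph, as a `Finset`. -/
noncomputable def finBall (z : V) (r : ℝ) : Finset V :=
  (Γ.finite_ball z r).toFinset

@[simp]
theorem coe_finBall (z : V) (r : ℝ) : (Γ.finBall z r : Set V) = Γ.ball z r :=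
  Set.Finite.coe_toFinset _

theorem mem_finBall {z x : V} {r : ℝ} : x ∈ Γ.finBall z r ↔ (Γ.G.dist z x : ℝ) ≤ r :=
  Set.Finite.mem_toFinset _

theorem finBall_mono (z : V) {r r' : ℝ} (h : r ≤ r') : Γ.finBall z r ⊆ Γ.finBall z r' :=
  fun _ hx => mem_finBall.2 ((mem_finBall.1 hx).trans h)

theorem mem_finBall_self (z : V) {r : ℝ} (hr : 0 ≤ r) : z ∈ Γ.finBall z r :=
  mem_finBall.2 (by simpa using hr)

end Balls

section Cutoff

variable (Γ) in
/-- The cutoff function which vanishes outside the ball `B(z, r)` and equals `1` on `B(z, r - δ)`,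
with slope `1 / δ` in between. -/
noncomputable def cutoff (z : V) (r δ : ℝ) (x : V) : ℝ :=
  ramp ((r - Γ.G.dist z x) / δ)

variable {z : V} {r δ : ℝ}

theorem cutoff_sq_le_one (x : V) : Γ.cutoff z r δ x ^ 2 ≤ 1 :=
  pow_le_one₀ (ramp_nonneg _) (ramp_le_one _)

theorem dist_lt_of_cutoff_ne_zero (hδ : 0 < δ) {x : V} (hx : Γ.cutoff z r δ x ≠ 0) :
    (Γ.G.dist z x : ℝ) < r := by
  contrapose! hx
  exact ramp_of_nonpos (div_nonpos_of_nonpos_of_nonneg (by linarith) hδ.le)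

theorem cutoff_eq_one (hδ : 0 < δ) {x : V} (hx : (Γ.G.dist z x : ℝ) ≤ r - δ) :
    Γ.cutoff z r δ x = 1 :=
  ramp_of_one_le ((one_le_div hδ).2 (by linarith))

theorem abs_cutoff_sub_cutoff_le (hδ : 0 < δ) {x y : V} (h : Γ.G.Adj x y) :
    |Γ.cutoff z r δ x - Γ.cutoff z r δ y| ≤ 1 / δ := by
  refine (abs_ramp_sub_ramp_le _ _).trans ?_
  rw [← sub_div, abs_div, abs_of_pos hδ, div_le_div_iff_of_pos_right hδ, abs_le]
  have := dist_le_dist_add_one z h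
  have := dist_le_dist_add_one z h.symm
  constructor <;> linarith

variable [Γ.G.LocallyFinite] {f : V → ℝ}

theorem cutoff_mul_eq_zero (hδ : 0 < δ) {x : V} (hx : x ∉ Γ.finBall z r) :
    Γ.cutoff z r δ x * f x = 0 := by
  rw [mul_eq_zero]
  by_contra! h
  exact hx (mem_finBall.2 (dist_lt_of_cutoff_ne_zero hδ h.1).le)

theorem sqnorm_cutoff_mul_le (hδ : 0 < δ) {r' : ℝ} (hr : r ≤ r') :
    Γ.sqnorm (fun x => Γ.cutoff z r δ x * f x) ≤ Γ.sqnormOn (Γ.finBall z r') f := by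
  rw [sqnorm_eq_sqnormOn fun x => cutoff_mul_eq_zero hδ]
  refine sqnormOn_le_sqnormOn (finBall_mono z hr) fun x _ => ?_
  rw [mul_pow]
  exact mul_le_of_le_one_left (sq_nonneg _) (cutoff_sq_le_one x)

theorem sqnormOn_le_sqnorm_cutoff_mul (hδ : 0 < δ) :
    Γ.sqnormOn (Γ.finBall z (r - δ)) f ≤ Γ.sqnorm fun x => Γ.cutoff z r δ x * f x := by
  rw [sqnorm_eq_sqnormOn fun x => cutoff_mul_eq_zero hδ]
  refine sqnormOn_le_sqnormOn (finBall_mono z (by linarith)) fun x hx => ?_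
  rw [cutoff_eq_one hδ (mem_finBall.1 hx), one_mul]

end Cutoff

section FaberKrahn

theorem lambda1_mul_sqnorm_le {Ω : Finset V} {f : V → ℝ} (hf : ∀ x ∉ Ω, f x = 0) :
    Γ.lambda1 Ω * Γ.sqnorm f ≤ Γ.energy f := by
  rcases (Γ.sqnorm_nonneg f).eq_or_lt with h0 | hpos
  · rw [← h0, mul_zero]
    exact energy_nonneg f
  · have hf0 : f ≠ 0 := by
      rintro rfl
      simp [sqnorm] at hpos
    rw [← le_div_iff₀ hpos]
    refine csInf_le ⟨0, ?_⟩ ⟨f, hf0, fun x => not_imp_comm.1 (hf x), rfl⟩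
    rintro _ ⟨g, _, _, rfl⟩
    exact div_nonneg (energy_nonneg g) (sqnorm_nonneg g)

variable (Γ) in
/-- The Faber-Krahn inequality `λ₁(Ω) ≥ b / π(Ω) ^ α` for all nonempty finite subsets `Ω`
of `B`. -/
def FaberKrahnOn (B : Set V) (b α : ℝ) : Prop :=
  ∀ Ω : Finset V, Ω.Nonempty → (Ω : Set V) ⊆ B → b / (∑ x ∈ Ω, Γ.wV x) ^ α ≤ Γ.lambda1 Ω

theorem IsRelFK.faberKrahnOn {F : V → ℝ → ℝ} {a α : ℝ}
    (hΓ : Γ.IsRelFK fun z r ν => (a / r ^ 2) * (F z r / ν) ^ α) (z : V) {r : ℝ}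
    (hF : 0 ≤ F z r) : Γ.FaberKrahnOn (Γ.ball z r) (a / r ^ 2 * F z r ^ α) α := by
  intro Ω hΩ hΩB
  rw [mul_div_assoc, ← Real.div_rpow hF (Finset.sum_nonneg fun x _ => (Γ.wV_pos x).le)]
  exact hΓ.2 z r Ω hΩ hΩB

variable {B : Set V} {b α : ℝ}

theorem FaberKrahnOn.mono {B' : Set V} (hfk : Γ.FaberKrahnOn B b α) (hB : B' ⊆ B) :
    Γ.FaberKrahnOn B' b α :=
  fun Ω hΩ hΩB => hfk Ω hΩ (hΩB.trans hB)

theorem FaberKrahnOn.mul_sqnorm_le (hfk : Γ.FaberKrahnOn B b α) (hα : 0 ≤ α) {Ω : Finset V}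
    (hΩ : (Ω : Set V) ⊆ B) {f : V → ℝ} (hf : ∀ x ∉ Ω, f x = 0) {ν : ℝ}
    (hν : ∑ x ∈ Ω, Γ.wV x ≤ ν) : b * Γ.sqnorm f ≤ ν ^ α * Γ.energy f := by
  have hvol : 0 ≤ ∑ x ∈ Ω, Γ.wV x := Finset.sum_nonneg fun x _ => (Γ.wV_pos x).le
  rcases Ω.eq_empty_or_nonempty with rfl | hne
  · rw [sqnorm_eq_sqnormOn hf, sqnormOn, Finset.sum_empty, mul_zero]
    exact mul_nonneg (Real.rpow_nonneg (hvol.trans hν) α) (energy_nonneg f)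
  · have hpos : 0 < ∑ x ∈ Ω, Γ.wV x := Finset.sum_pos (fun x _ => Γ.wV_pos x) hne
    have hquot : b / (∑ x ∈ Ω, Γ.wV x) ^ α * Γ.sqnorm f ≤ Γ.energy f :=
      (mul_le_mul_of_nonneg_right (hfk Ω hne hΩ) (sqnorm_nonneg f)).trans
        (lambda1_mul_sqnorm_le hf)
    rw [div_mul_eq_mul_div, div_le_iff₀' (by positivity)] at hquot
    exact hquot.trans (mul_le_mul_of_nonneg_right (by gcongr) (energy_nonneg f))

variable [Γ.G.LocallyFinite]

theorem FaberKrahnOn.le_wV_rpow (hfk : Γ.FaberKrahnOn B b α) (hα : 0 ≤ α) {z : V} (hz : z ∈ B) :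
    b ≤ Γ.wV z ^ α := by
  classical
  set f : V → ℝ := fun x => if x = z then 1 else 0
  have hf : ∀ x ∉ ({z} : Finset V), f x = 0 := fun x hx => if_neg (Finset.mem_singleton.not.1 hx)
  have hsqnorm : Γ.sqnorm f = Γ.wV z := by simp [sqnorm_eq_sqnormOn hf, sqnormOn, f]
  have henergy : Γ.energy f ≤ Γ.wV z := by
    rw [← hsqnorm]
    refine energy_le_sqnorm (S := Γ.finBall z 1) (fun x hx => hf x ?_) (fun x y hx hxy => ?_)
      fun x => by positivity
    · rw [Finset.mem_singleton]
      rintro rfl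
      exact hx (mem_finBall_self x zero_le_one)
    · obtain rfl : x = z := by simpa [f] using hx
      rw [mem_finBall, SimpleGraph.dist_eq_one_iff_adj.2 hxy, Nat.cast_one]
  have hpoincare := hfk.mul_sqnorm_le hα (Ω := {z}) (by simpa using hz) hf
    (Finset.sum_singleton _ _).le
  rw [hsqnorm] at hpoincare
  exact le_of_mul_le_mul_right (hpoincare.trans (by have := Γ.wV_pos z; gcongr)) (Γ.wV_pos z)

end FaberKrahn

section LocalEstimates

variable (Γ) in
theorem sum_wV_superlevel_le (A : Finset V) (f : V → ℝ) {θ θ' : ℝ} (hθ : θ < θ') :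
    ∑ x ∈ A with θ' < f x, Γ.wV x ≤
      Γ.sqnormOn A (fun x => (f x - θ)⁺) / (θ' - θ) ^ 2 := by
  have := sub_pos.2 hθ
  rw [le_div_iff₀ (by positivity), Finset.sum_mul]
  refine (Finset.sum_le_sum fun x hx => ?_).trans <|
    Finset.sum_le_sum_of_subset_of_nonneg (Finset.filter_subset _ A) fun x _ _ =>
      mul_nonneg (sq_nonneg _) (Γ.wV_pos x).le
  have hfx : θ' - θ ≤ (f x - θ)⁺ :=
    (sub_le_sub_right (Finset.mem_filter.1 hx).2.le θ).trans (le_posPart _)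
  have := Γ.wV_pos x
  rw [mul_comm]
  gcongr

variable [Γ.G.LocallyFinite]

variable (Γ) in
/-- The squared `L²`-norm of `v` over the space-time cylinder `[s, T] × B(z, r)`. -/
noncomputable def cylinderSum (z : V) (r s : ℝ) (T : ℕ) (v : ℕ → V → ℝ) : ℝ :=
  ∑ k ∈ Finset.Icc ⌈s⌉₊ T, Γ.sqnormOn (Γ.finBall z r) (v k)

variable {z : V} {r s σ δ c : ℝ} {T : ℕ} {v : ℕ → V → ℝ}

theorem cylinderSum_nonneg (z : V) (r s : ℝ) (T : ℕ) (v : ℕ → V → ℝ) :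
    0 ≤ Γ.cylinderSum z r s T v :=
  Finset.sum_nonneg fun _ _ => sqnormOn_nonneg _ _

theorem cylinderSum_le_cylinderSum {r' s' : ℝ} {w : ℕ → V → ℝ} (hr : r ≤ r') (hs : s' ≤ s)
    (hvw : ∀ k x, v k x ^ 2 ≤ w k x ^ 2) :
    Γ.cylinderSum z r s T v ≤ Γ.cylinderSum z r' s' T w :=
  (Finset.sum_le_sum fun k _ => sqnormOn_le_sqnormOn (finBall_mono z hr) fun x _ =>
    hvw k x).trans <| Finset.sum_le_sum_of_subset_of_nonneg
      (Finset.Icc_subset_Icc (Nat.ceil_le_ceil hs) le_rfl) fun _ _ _ => sqnormOn_nonneg _ _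

theorem sq_mul_wV_le_cylinderSum (v : ℕ → V → ℝ) (hr : 0 ≤ r) (hs : s ≤ T) :
    v T z ^ 2 * Γ.wV z ≤ Γ.cylinderSum z r s T v :=
  (Finset.single_le_sum (f := fun x => v T x ^ 2 * Γ.wV x)
    (fun x _ => mul_nonneg (sq_nonneg _) (Γ.wV_pos x).le) (mem_finBall_self z hr)).trans <|
    Finset.single_le_sum (f := fun k => Γ.sqnormOn (Γ.finBall z r) (v k))
      (fun _ _ => sqnormOn_nonneg _ _) (Finset.mem_Icc.2 ⟨Nat.ceil_le.2 hs, le_rfl⟩)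

theorem sqnorm_cutoff_mul_add_energy_le (hlazy : Γ.UniformlyLazy c) (hδ : 1 ≤ δ)
    (hv : Γ.IsSubsolution T (Γ.ball z r) v) (hv₀ : ∀ n x, 0 ≤ v n x) {n : ℕ} (hn : n ≤ T) :
    Γ.sqnorm (fun x => Γ.cutoff z (r - δ) δ x * v (n + 1) x) +
        c / 2 * Γ.energy (fun x => Γ.cutoff z (r - δ) δ x * v n x) ≤
      Γ.sqnorm (fun x => Γ.cutoff z (r - δ) δ x * v n x) +
        4 / (c * δ ^ 2) * Γ.sqnormOn (Γ.finBall z r) (v n) := by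
  have hδ₀ : 0 < δ := zero_lt_one.trans_le hδ
  have hball : ∀ x, Γ.cutoff z (r - δ) δ x ≠ 0 → x ∈ Γ.finBall z r := fun x hx =>
    mem_finBall.2 (by linarith [dist_lt_of_cutoff_ne_zero hδ₀ hx])
  have hadj : ∀ x y, Γ.cutoff z (r - δ) δ x ≠ 0 → Γ.G.Adj x y → y ∈ Γ.finBall z r :=
    fun x y hx hxy => mem_finBall.2 <| by
      linarith [dist_lt_of_cutoff_ne_zero hδ₀ hx, dist_le_dist_add_one z hxy]
  convert sqnorm_mul_add_energy_mul_le hlazy (fun x => not_imp_comm.1 (hball x)) hadj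
    (fun x y => abs_cutoff_sub_cutoff_le hδ₀) (hv₀ (n + 1)) (v := v n) (fun x hx =>
      (sub_le_tsum_mkernel_iff (fun y => hadj x y hx) _ _).1
        (hv n hn x (mem_finBall.1 (hball x hx)))) using 3
  field_simp

theorem sqnormOn_le_cylinderSum (hlazy : Γ.UniformlyLazy c) (hs : 0 ≤ s) (hσ : 0 < σ)
    (hδ : 1 ≤ δ) (hv : Γ.IsSubsolution T (Γ.ball z r) v) (hv₀ : ∀ n x, 0 ≤ v n x) {n : ℕ}
    (hn : n ≤ T) (hsn : s + σ ≤ n) :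
    Γ.sqnormOn (Γ.finBall z (r - 2 * δ)) (v n) ≤
      8 / c ^ 2 * (1 / σ + 1 / δ ^ 2) * Γ.cylinderSum z r s T v := by
  have hδ₀ : 0 < δ := zero_lt_one.trans_le hδ
  obtain ⟨hc, hc1⟩ := hlazy.1
  calc Γ.sqnormOn (Γ.finBall z (r - 2 * δ)) (v n)
      ≤ Γ.sqnorm (fun x => Γ.cutoff z (r - δ) δ x * v n x) := by
        rw [show r - 2 * δ = r - δ - δ by ring]
        exact sqnormOn_le_sqnorm_cutoff_mul hδ₀
    _ ≤ (1 / σ + 4 / (c * δ ^ 2)) * Γ.cylinderSum z r s T v :=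
        le_sum_of_le_add hs hσ (half_pos hc).le (by positivity) (fun _ => sqnorm_nonneg _)
          (fun _ => energy_nonneg _)
          (fun _ => sqnorm_cutoff_mul_le hδ₀ (sub_le_self r hδ₀.le))
          (fun _ hn => sqnorm_cutoff_mul_add_energy_le hlazy hδ hv hv₀ hn) hn hsn
    _ ≤ _ := by
        refine mul_le_mul_of_nonneg_right ?_ (cylinderSum_nonneg _ _ _ _ _)
        refine (one_div_add_four_div_le hc hc1.le hσ hδ₀).trans ?_
        exact mul_le_of_le_one_left (by positivity) (by linarith)

theorem sum_energy_le_cylinderSum (hlazy : Γ.UniformlyLazy c) (hs : 0 ≤ s) (hσ : 0 < σ)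
    (hδ : 1 ≤ δ) (hv : Γ.IsSubsolution T (Γ.ball z r) v) (hv₀ : ∀ n x, 0 ≤ v n x) :
    ∑ k ∈ Finset.Icc ⌈s + σ⌉₊ T, Γ.energy (fun x => Γ.cutoff z (r - δ) δ x * v k x) ≤
      8 / c ^ 2 * (1 / σ + 1 / δ ^ 2) * Γ.cylinderSum z r s T v := by
  have hδ₀ : 0 < δ := zero_lt_one.trans_le hδ
  obtain ⟨hc, hc1⟩ := hlazy.1
  refine le_of_mul_le_mul_left ?_ (half_pos hc)
  calc c / 2 * ∑ k ∈ Finset.Icc ⌈s + σ⌉₊ T,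
        Γ.energy (fun x => Γ.cutoff z (r - δ) δ x * v k x)
      ≤ (1 / σ + 4 / (c * δ ^ 2)) * Γ.cylinderSum z r s T v :=
        mul_sum_le_sum_of_le_add hs hσ (half_pos hc).le (by positivity)
          (fun _ => sqnorm_nonneg _) (fun _ => energy_nonneg _)
          (fun _ => sqnorm_cutoff_mul_le hδ₀ (sub_le_self r hδ₀.le))
          fun _ hn => sqnorm_cutoff_mul_add_energy_le hlazy hδ hv hv₀ hn
    _ ≤ _ := by
        rw [← mul_assoc]
        exact mul_le_mul_of_nonneg_right (one_div_add_four_div_le hc hc1.le hσ hδ₀)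
          (cylinderSum_nonneg _ _ _ _ _)

theorem FaberKrahnOn.mul_sqnormOn_posPart_le {B : Set V} {b α ν θ : ℝ} {f : V → ℝ}
    (hfk : Γ.FaberKrahnOn B b α) (hb : 0 ≤ b) (hα : 0 ≤ α) (hδ : 0 < δ) (hB : Γ.ball z r ⊆ B)
    (hν : ∑ x ∈ Γ.finBall z r with θ < f x, Γ.wV x ≤ ν) :
    b * Γ.sqnormOn (Γ.finBall z (r - 2 * δ)) (fun x => (f x - θ)⁺) ≤
      ν ^ α * Γ.energy fun x => Γ.cutoff z (r - δ) δ x * (f x - θ)⁺ := by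
  have hmono : Γ.sqnormOn (Γ.finBall z (r - 2 * δ)) (fun x => (f x - θ)⁺) ≤
      Γ.sqnorm fun x => Γ.cutoff z (r - δ) δ x * (f x - θ)⁺ := by
    rw [show r - 2 * δ = r - δ - δ by ring]
    exact sqnormOn_le_sqnorm_cutoff_mul hδ
  refine (mul_le_mul_of_nonneg_left hmono hb).trans <|
    hfk.mul_sqnorm_le hα (fun x hx => hB ?_) (fun x hx => ?_) hν
  · exact mem_finBall.1 (Finset.mem_filter.1 hx).1
  · contrapose! hx
    obtain ⟨hηx, hfx⟩ := mul_ne_zero_iff.1 hx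
    refine Finset.mem_filter.2 ⟨mem_finBall.2 ?_, ?_⟩
    · linarith [dist_lt_of_cutoff_ne_zero hδ hηx]
    · contrapose! hfx
      exact posPart_eq_zero.2 (sub_nonpos.2 hfx)

theorem FaberKrahnOn.cylinderSum_posPart_sub_le {b α θ θ' G : ℝ} {u : ℕ → V → ℝ}
    (hfk : Γ.FaberKrahnOn (Γ.ball z r) b α) (hb : 0 < b) (hα : 0 ≤ α)
    (hlazy : Γ.UniformlyLazy c) (hu : Γ.IsSubsolution T (Γ.ball z r) u) (hs : 0 ≤ s)
    (hσ : 0 < σ) (hδ : 1 ≤ δ) (hθ : θ < θ')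
    (hG : 8 / c ^ 2 * (1 / σ + 1 / δ ^ 2) * Γ.cylinderSum z r s T (fun n x => (u n x - θ)⁺) ≤
      G) :
    Γ.cylinderSum z (r - 4 * δ) (s + 2 * σ) T (fun n x => (u n x - θ')⁺) ≤
      (G / (θ' - θ) ^ 2) ^ α * G / b := by
  have hδ₀ : 0 < δ := zero_lt_one.trans_le hδ
  have hball : Γ.ball z (r - 2 * δ) ⊆ Γ.ball z r := ball_mono z (by linarith)
  have hvol : ∀ k ≤ T, s + σ ≤ k →
      ∑ x ∈ Γ.finBall z (r - 2 * δ) with θ' < u k x, Γ.wV x ≤ G / (θ' - θ) ^ 2 := by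
    intro k hk hsk
    refine (Γ.sum_wV_superlevel_le _ _ hθ).trans (div_le_div_of_nonneg_right ?_ (sq_nonneg _))
    exact (sqnormOn_le_cylinderSum hlazy hs hσ hδ (hu.posPart_sub θ)
      (fun _ _ => posPart_nonneg _) hk hsk).trans hG
  have henergy : ∑ k ∈ Finset.Icc ⌈s + 2 * σ⌉₊ T,
      Γ.energy (fun x => Γ.cutoff z (r - 2 * δ - δ) δ x * (u k x - θ')⁺) ≤ G := by
    rw [show s + 2 * σ = s + σ + σ by ring]
    refine (sum_energy_le_cylinderSum hlazy (by linarith) hσ hδ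
      ((hu.posPart_sub θ').mono le_rfl hball) fun _ _ => posPart_nonneg _).trans (le_trans ?_ hG)
    refine mul_le_mul_of_nonneg_left ?_ (by positivity)
    refine cylinderSum_le_cylinderSum (by linarith) (by linarith) fun k x => ?_
    exact pow_le_pow_left₀ (posPart_nonneg _) (posPart_mono (by linarith)) 2
  have hG₀ : 0 ≤ G := le_trans (mul_nonneg (by positivity) (cylinderSum_nonneg _ _ _ _ _)) hG
  rw [le_div_iff₀' hb, cylinderSum, Finset.mul_sum, show r - 4 * δ = r - 2 * δ - 2 * δ by ring]
  refine (Finset.sum_le_sum fun k hk => ?_).trans <|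
    (Finset.mul_sum _ _ _).symm.le.trans (mul_le_mul_of_nonneg_left henergy (by positivity))
  obtain ⟨hsk, hkT⟩ := Finset.mem_Icc.1 hk
  exact hfk.mul_sqnormOn_posPart_le hb.le hα hδ₀ hball
    (hvol k hkT (by linarith [Nat.ceil_le.1 hsk]))

end LocalEstimates

section DeGiorgi

variable [Γ.G.LocallyFinite]

variable (Γ) in
/-- The `k`-th quantity of the De Giorgi iteration: the squared `L²`-norm of the truncation of `u`
at the level `θ (1 - 2⁻ᵏ)`, over the cylinder `[T (1 - 2⁻ᵏ) / 2, T] × B(z, R (1 + 2⁻ᵏ) / 2)`. -/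
noncomputable def deGiorgiSum (z : V) (R : ℝ) (T : ℕ) (u : ℕ → V → ℝ) (θ : ℝ) (k : ℕ) : ℝ :=
  Γ.cylinderSum z (R / 2 * (1 + (1 / 2) ^ k)) (T / 2 * (1 - (1 / 2) ^ k)) T
    fun n x => (u n x - θ * (1 - (1 / 2) ^ k))⁺

/-- The constant in the mean value inequality for signed subsolutions: `8 / c ^ 2` is the
Caccioppoli constant, and `2112 = 8 * 264` where `264` comes from summing `1 / σ + 1 / δ ^ 2` over
the time and space steps `σ`, `δ` of the iteration. -/
noncomputable def meanValueConst (c α : ℝ) : ℝ :=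
  8 * (2112 / c ^ 2) * (2112 / c ^ 2 / (1 / 16) ^ (1 + 1 / α)) ^ (1 / α) + 2 * 256 ^ (1 + 1 / α)

variable {z : V} {R b α c τ θ : ℝ} {T : ℕ} {u : ℕ → V → ℝ}

theorem deGiorgiSum_nonneg (k : ℕ) : 0 ≤ Γ.deGiorgiSum z R T u θ k :=
  cylinderSum_nonneg _ _ _ _ _

theorem deGiorgiSum_zero :
    Γ.deGiorgiSum z R T u θ 0 = Γ.cylinderSum z R 0 T fun n x => (u n x)⁺ := by
  simp [deGiorgiSum, one_add_one_eq_two]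

theorem sq_mul_wV_le_deGiorgiSum (hR : 0 ≤ R) (hθ : 0 ≤ θ) (k : ℕ) :
    (u T z - θ)⁺ ^ 2 * Γ.wV z ≤ Γ.deGiorgiSum z R T u θ k := by
  have hk : (0 : ℝ) ≤ (1 / 2) ^ k := by positivity
  have hT : (T : ℝ) / 2 * (1 - (1 / 2) ^ k) ≤ T := by
    nlinarith [mul_nonneg T.cast_nonneg hk, T.cast_nonneg (α := ℝ)]
  have hlevel : θ * (1 - (1 / 2) ^ k) ≤ θ := mul_le_of_le_one_right hθ (by linarith)
  have := Γ.wV_pos z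
  calc (u T z - θ)⁺ ^ 2 * Γ.wV z ≤ (u T z - θ * (1 - (1 / 2) ^ k))⁺ ^ 2 * Γ.wV z := by
        gcongr
        exact posPart_mono (by linarith)
    _ ≤ Γ.deGiorgiSum z R T u θ k :=
        sq_mul_wV_le_cylinderSum (fun n x => (u n x - θ * (1 - (1 / 2) ^ k))⁺) (by positivity) hT

theorem FaberKrahnOn.deGiorgiSum_succ_le (hfk : Γ.FaberKrahnOn (Γ.ball z R) b α) (hb : 0 < b)
    (hα : 0 ≤ α) (hlazy : Γ.UniformlyLazy c) (hu : Γ.IsSubsolution T (Γ.ball z R) u)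
    (hθ : 0 < θ) (hτ : 0 < τ) (hτT : τ ≤ T) (hτR : τ ≤ R ^ 2) {k : ℕ} (hk : 16 * 2 ^ k ≤ R) :
    Γ.deGiorgiSum z R T u θ (k + 1) ≤
      2112 / c ^ 2 / (b * τ) * (4 * (2112 / c ^ 2) / (τ * θ ^ 2)) ^ α * (16 ^ α * 4) ^ k *
        Γ.deGiorgiSum z R T u θ k ^ α * Γ.deGiorgiSum z R T u θ k := by
  have hR : 0 < R := hk.trans_lt' (by positivity)
  have hT : (0 : ℝ) < T := hτ.trans_le hτT
  have hk1 : (1 / 2 : ℝ) ^ k ≤ 1 := pow_le_one₀ (by norm_num) (by norm_num)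
  have hball : Γ.ball z (R / 2 * (1 + (1 / 2) ^ k)) ⊆ Γ.ball z R :=
    ball_mono z (by linarith [mul_le_mul_of_nonneg_left hk1 hR.le])
  have hδ : 1 ≤ R / 16 * (1 / 2) ^ k := by
    rw [one_div_pow, mul_one_div, div_div, one_le_div (by positivity)]
    exact hk
  have hgap : θ * (1 - (1 / 2) ^ (k + 1)) - θ * (1 - (1 / 2) ^ k) = θ / 2 * (1 / 2) ^ k := by
    ring
  have hG : 8 / c ^ 2 * (1 / (T / 8 * (1 / 2) ^ k) + 1 / (R / 16 * (1 / 2) ^ k) ^ 2) *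
      Γ.deGiorgiSum z R T u θ k ≤ 2112 / c ^ 2 * (4 ^ k / τ) * Γ.deGiorgiSum z R T u θ k := by
    refine mul_le_mul_of_nonneg_right ?_ (deGiorgiSum_nonneg k)
    calc _ ≤ 8 / c ^ 2 * (264 * 4 ^ k / τ) := by
          gcongr
          exact one_div_add_one_div_sq_le hτ hτT hτR k
      _ = 2112 / c ^ 2 * (4 ^ k / τ) := by ring
  have hlevel : θ * (1 - (1 / 2) ^ k) < θ * (1 - (1 / 2) ^ (k + 1)) := by
    rw [← sub_pos, hgap]
    positivity
  have hstep := (hfk.mono hball).cylinderSum_posPart_sub_le (θ' := θ * (1 - (1 / 2) ^ (k + 1)))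
    hb hα hlazy (hu.mono le_rfl hball) (mul_nonneg (half_pos hT).le (sub_nonneg.2 hk1))
    (by positivity) hδ hlevel hG
  rw [← rpow_mul_div_eq_pow_mul (by positivity) hτ.le (deGiorgiSum_nonneg k)]
  convert hstep using 1
  · rw [deGiorgiSum]
    congr 1 <;> ring
  · rw [hgap]

theorem FaberKrahnOn.sq_posPart_sub_mul_wV_le (hfk : Γ.FaberKrahnOn (Γ.ball z R) b α)
    (hb : 0 < b) (hα : 0 < α) (hlazy : Γ.UniformlyLazy c)
    (hu : Γ.IsSubsolution T (Γ.ball z R) u) (hR : 0 ≤ R) (hθ : 0 < θ) (hτ : 0 < τ) (hτT : τ ≤ T)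
    (hτR : τ ≤ R ^ 2)
    (hstart : 2112 / c ^ 2 / (b * τ) * (4 * (2112 / c ^ 2) / (τ * θ ^ 2)) ^ α *
      (Γ.cylinderSum z R 0 T fun n x => (u n x)⁺) ^ α ≤ (1 / 16) ^ (1 + 1 / α)) :
    (u T z - θ)⁺ ^ 2 * Γ.wV z ≤
      (256 / τ) ^ (1 + 1 / α) * Γ.cylinderSum z R 0 T fun n x => (u n x)⁺ := by
  obtain ⟨K, hbelow, hK⟩ := exists_dyadic_scale R
  rw [← deGiorgiSum_zero (θ := θ)] at hstart ⊢
  calc (u T z - θ)⁺ ^ 2 * Γ.wV z ≤ Γ.deGiorgiSum z R T u θ K :=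
        sq_mul_wV_le_deGiorgiSum hR hθ.le K
    _ ≤ ((1 / 16) ^ (1 + 1 / α)) ^ K * Γ.deGiorgiSum z R T u θ 0 :=
        le_pow_mul_of_superlinear_recursion hα.le (by positivity) (by positivity) (by positivity)
          deGiorgiSum_nonneg (fun k hk => hfk.deGiorgiSum_succ_le hb hα.le hlazy hu hθ hτ hτT hτR
            (hbelow k hk)) hstart (rpow_mul_rpow_mul_four_le_one hα) le_rfl
    _ ≤ (256 / τ) ^ (1 + 1 / α) * Γ.deGiorgiSum z R T u θ 0 :=
        mul_le_mul_of_nonneg_right (one_div_sixteen_rpow_pow_le hτ hτR hR (by positivity) hK)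
          (deGiorgiSum_nonneg 0)

theorem FaberKrahnOn.rpow_one_div_le_wV (hfk : Γ.FaberKrahnOn (Γ.ball z R) b α) (hb : 0 ≤ b)
    (hα : 0 < α) (hR : 0 ≤ R) : b ^ (1 / α) ≤ Γ.wV z := by
  rw [one_div, Real.rpow_inv_le_iff_of_pos hb (Γ.wV_pos z).le hα]
  exact hfk.le_wV_rpow hα.le (mem_finBall.1 (mem_finBall_self z hR))

theorem FaberKrahnOn.sq_posPart_sub_le (hfk : Γ.FaberKrahnOn (Γ.ball z R) b α) (hb : 0 < b)
    (hα : 0 < α) (hlazy : Γ.UniformlyLazy c) (hu : Γ.IsSubsolution T (Γ.ball z R) u)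
    (hR : 0 ≤ R) (hτ : 0 < τ) (hτT : τ ≤ T) (hτR : τ ≤ R ^ 2) (hθ₀ : 0 < θ)
    (hθ : θ ^ 2 = 4 * (2112 / c ^ 2) * (2112 / c ^ 2 / (1 / 16) ^ (1 + 1 / α)) ^ (1 / α) /
      (b ^ (1 / α) * τ ^ (1 + 1 / α)) * Γ.cylinderSum z R 0 T fun n x => (u n x)⁺) :
    (u T z - θ)⁺ ^ 2 ≤ 256 ^ (1 + 1 / α) / (b ^ (1 / α) * τ ^ (1 + 1 / α)) *
      Γ.cylinderSum z R 0 T fun n x => (u n x)⁺ := by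
  have hc : 0 < c := hlazy.1.1
  have hJ : 0 < Γ.cylinderSum z R 0 T fun n x => (u n x)⁺ := by
    refine (cylinderSum_nonneg _ _ _ _ _).lt_of_ne fun h => ?_
    rw [← h, mul_zero] at hθ
    exact (pow_pos hθ₀ 2).ne' hθ
  have hstart := (mul_threshold_rpow_eq (by positivity) hb hτ (by positivity) hα hJ hθ).le
  have htrunc := hfk.sq_posPart_sub_mul_wV_le hb hα hlazy hu hR hθ₀ hτ hτT hτR hstart
  rw [Real.div_rpow (by norm_num) hτ.le] at htrunc
  rw [div_mul_eq_mul_div, mul_comm (b ^ (1 / α)), ← div_div, le_div_iff₀ (by positivity)]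
  calc (u T z - θ)⁺ ^ 2 * b ^ (1 / α) ≤ (u T z - θ)⁺ ^ 2 * Γ.wV z := by
        gcongr
        exact hfk.rpow_one_div_le_wV hb.le hα hR
    _ ≤ _ := htrunc.trans_eq (div_mul_eq_mul_div _ _ _)

theorem FaberKrahnOn.sq_posPart_le (hfk : Γ.FaberKrahnOn (Γ.ball z R) b α) (hb : 0 < b)
    (hα : 0 < α) (hlazy : Γ.UniformlyLazy c) (hu : Γ.IsSubsolution T (Γ.ball z R) u)
    (hR : 0 ≤ R) (hτ : 0 < τ) (hτT : τ ≤ T) (hτR : τ ≤ R ^ 2) :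
    (u T z)⁺ ^ 2 ≤ meanValueConst c α / (b ^ (1 / α) * τ ^ (1 + 1 / α)) *
      Γ.cylinderSum z R 0 T fun n x => (u n x)⁺ := by
  have hc : 0 < c := hlazy.1.1
  set J := Γ.cylinderSum z R 0 T fun n x => (u n x)⁺ with hJ_def
  have hcenter : (u T z)⁺ ^ 2 * Γ.wV z ≤ J :=
    sq_mul_wV_le_cylinderSum (fun n x => (u n x)⁺) hR T.cast_nonneg
  have hJ₀ : 0 ≤ J := cylinderSum_nonneg _ _ _ _ _
  rcases hJ₀.eq_or_lt with hJ | hJ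
  · rw [← hJ] at hcenter ⊢
    rw [mul_zero]
    exact nonpos_of_mul_nonpos_left hcenter (Γ.wV_pos z)
  obtain ⟨θ, hθ₀, hθ⟩ : ∃ θ : ℝ, 0 < θ ∧
      θ ^ 2 = 4 * (2112 / c ^ 2) * (2112 / c ^ 2 / (1 / 16) ^ (1 + 1 / α)) ^ (1 / α) /
        (b ^ (1 / α) * τ ^ (1 + 1 / α)) * J :=
    ⟨√_, Real.sqrt_pos.2 (by positivity), Real.sq_sqrt (by positivity)⟩
  have hexcess := hfk.sq_posPart_sub_le hb hα hlazy hu hR hτ hτT hτR hθ₀ hθ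
  rw [← hJ_def] at hexcess
  have hsplit : (u T z)⁺ ≤ θ + (u T z - θ)⁺ :=
    sup_le (by linarith [le_posPart (u T z - θ)]) (by positivity)
  calc (u T z)⁺ ^ 2 ≤ (θ + (u T z - θ)⁺) ^ 2 := pow_le_pow_left₀ (posPart_nonneg _) hsplit 2
    _ ≤ 2 * (θ ^ 2 + (u T z - θ)⁺ ^ 2) := add_sq_le
    _ ≤ 2 * (θ ^ 2 + 256 ^ (1 + 1 / α) / (b ^ (1 / α) * τ ^ (1 + 1 / α)) * J) := by gcongr
    _ = _ := by rw [hθ, meanValueConst]; ring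

theorem meanValueConst_pos (hc : 0 < c) : 0 < meanValueConst c α := by
  unfold meanValueConst
  positivity

theorem cylinderSum_zero_eq_sum_setSum (z : V) (R : ℝ) (T : ℕ) (v : ℕ → V → ℝ) :
    Γ.cylinderSum z R 0 T v =
      ∑ k ∈ Finset.range (T + 1), setSum (Γ.ball z R) fun x => v k x ^ 2 * Γ.wV x := by
  rw [cylinderSum, Nat.ceil_zero, ← Nat.bot_eq_zero, Finset.Icc_bot, Nat.range_succ_eq_Iic]
  refine Finset.sum_congr rfl fun k _ => ?_
  rw [sqnormOn, setSum, ← coe_finBall]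
  exact (Finset.tsum_subtype' (Γ.finBall z R) fun x => v k x ^ 2 * Γ.wV x).symm

end DeGiorgi

end WeightedGraph

theorem l2_mean_value_inequality_general {V : Type*} (Γ : WeightedGraph V) [Γ.G.LocallyFinite]
    {c : ℝ} (hlazy : Γ.UniformlyLazy c) {F : V → ℝ → ℝ} (hF : ∀ z r, 0 < r → 0 < F z r)
    {a α : ℝ} (ha : 0 < a) (hα : 0 < α)
    (hfk : Γ.IsRelFK fun z r ν => (a / r ^ 2) * (F z r / ν) ^ α) :
    ∃ C : ℝ, 0 < C ∧ ∀ z : V, ∀ R : ℝ, 1 ≤ R → ∀ T : ℕ, 1 ≤ T → ∀ u : ℕ → V → ℝ,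
      Γ.IsSubsolution T (Γ.ball z R) u →
      (u T z)⁺ ^ 2 ≤
        C / (F z R * min ((T : ℝ) ^ (1 + 1 / α) * R ^ (-(2 / α))) (R ^ 2)) *
          ∑ k ∈ Finset.range (T + 1), setSum (Γ.ball z R) fun x => (u k x)⁺ ^ 2 * Γ.wV x := by
  have hC : 0 < WeightedGraph.meanValueConst c α := WeightedGraph.meanValueConst_pos hlazy.1.1
  refine ⟨WeightedGraph.meanValueConst c α / a ^ (1 / α), by positivity,
    fun z R hR T hT u hu => ?_⟩
  have hR₀ : 0 < R := zero_lt_one.trans_le hR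
  have hT₀ : (0 : ℝ) < T := Nat.cast_pos.2 hT
  have hFR : 0 < F z R := hF z R hR₀
  have hmv := (hfk.faberKrahnOn z hFR.le).sq_posPart_le (by positivity) hα hlazy hu hR₀.le
    (lt_min hT₀ (by positivity)) (min_le_left _ (R ^ 2)) (min_le_right _ _)
  rwa [rpow_mul_rpow_min_eq ha.le hFR.le hR₀ hT₀.le hα, ← div_div,
    WeightedGraph.cylinderSum_zero_eq_sum_setSum] at hmv

/-- **Lemma (L² mean value inequality).**
Let `(Γ, wV, wE)` be a weighted graph with controlled and uniformly lazy weights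
admitting a relative Faber-Krahn function `Λ(B(z,r),ν) = (a/r²)(F(z,r)/ν)^α`.  Then
there is a constant `C` such that for every `z`, every `R ≥ 1`, every integer `T ≥ 1`
and every non-negative subsolution `u` of the discrete heat equation on
`{0, …, 2T} × B(z,R)`:
`u(T,z)² ≤ C (F(z,R) · min{T^{1+1/α} R^{-2/α}, R²})⁻¹ ∑_{k=0}^{2T} ∑_{x ∈ B(z,R)} u(k,x)² π(x)`. -/
theorem l2_mean_value_inequality {V : Type*} [Countable V]
    (Γ : WeightedGraph V) (Cc Ce : ℝ)
    (hctrl : Γ.Controlled Cc) (hlazy : Γ.UniformlyLazy Ce)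
    (F : V → ℝ → ℝ) (hF : ∀ z : V, ∀ r : ℝ, 0 < r → 0 < F z r)
    (a α : ℝ) (ha : 0 < a) (hα : 0 < α)
    (hfk : Γ.IsRelFK (fun z r ν => (a / r ^ 2) * (F z r / ν) ^ α)) :
    ∃ C : ℝ, 0 < C ∧
      ∀ z : V, ∀ R : ℝ, 1 ≤ R → ∀ T : ℕ, 1 ≤ T → ∀ u : ℕ → V → ℝ,
        (∀ n : ℕ, ∀ x : V, 0 ≤ u n x) →
        (∀ n : ℕ, n ≤ 2 * T → ∀ x ∈ Γ.ball z R,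
          u (n + 1) x - u n x ≤ ∑' y, mkernel Γ.wV Γ.wE x y * (u n y - u n x)) →
        u T z ^ 2 ≤
          C / (F z R * min ((T : ℝ) ^ (1 + 1 / α) * R ^ (-(2 / α))) (R ^ 2)) *
            ∑ k ∈ Finset.range (2 * T + 1),
              setSum (Γ.ball z R) (fun x => u k x ^ 2 * Γ.wV x) := by
  let _ : Γ.G.LocallyFinite :=
    fun x => (WeightedGraph.finite_neighborSet_of_controlled hctrl x).fintype
  obtain ⟨C, hC, hmv⟩ := l2_mean_value_inequality_general Γ hlazy hF ha hα hfk
  refine ⟨C, hC, fun z R hR T hT u hu₀ hu => ?_⟩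
  have hsub : Γ.IsSubsolution T (Γ.ball z R) u :=
    WeightedGraph.IsSubsolution.mono hu (by omega) subset_rfl
  have hmvT := hmv z R hR T hT u hsub
  simp only [posPart_eq_self.2 (hu₀ _ _)] at hmvT
  refine hmvT.trans (mul_le_mul_of_nonneg_left ?_ ?_)
  · exact Finset.sum_le_sum_of_subset_of_nonneg (by gcongr; omega) fun k _ _ =>
      tsum_nonneg fun x => mul_nonneg (sq_nonneg _) (Γ.wV_pos x).le
  · have := hF z R (by linarith)
    positivity
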